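/- Let d ≥ 1 and equip ℝ^d with the sup norm ‖x‖ = max_i |x_i|. Let γ' ∈ (0,1) and let F : ℝ^d → ℝ^d satisfy ‖F(x) − F(y)‖ ≤ γ'‖x − y‖ for all x, y, with fixed point θ* (F(θ*) = θ*) satisfying ‖θ*‖ ≤ Z for a constant Z > 0. Let (Ω, 𝒢, ℙ) be a probability space with a filtration (ℱ_t)_{t∈ℕ}, let τ ≥ 1 and t₀ be integers, let H ≥ 2/(1−γ'), t₀ ≥ max(4H, τ), and set α_t = H/(t + t₀). Let (θ_t)_{t≥τ} be an (ℱ_t)-adapted ℝ^d-valued process with ‖θ_t‖ ≤ Z almost surely for all t, and let (M_t)_{t≥τ} be ℝ^d-valued with M_t being ℱ_{t+1}-measurable, 𝔼[M_t | ℱ_t] = 0 almost surely, and ‖M_t‖ ≤ M̄ almost surely. Suppose the updates satisfy θ_{t+1} = (1 − α_t)θ_t + α_t(F(θ_t) + M_t) almost surely for all t ≥ τ. Then for every integer T > τ and every δ ∈ (0,1), with probability at least 1 − (T − τ)δ, ‖θ_T − θ*‖ ≤ (4M̄/(1 − γ'))·√(H·log(2d/δ)/(T + t₀)) + 4Z(τ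 + t₀)/((1 − γ')(T + t₀)). -/

import Mathlib

open MeasureTheory

/-!
Let `N` solve the recursion driven by the noise alone: `N₀ = 0`, `Nₙ₊₁ = (1 - αₙ) Nₙ + αₙ Mₙ`.
Subtracting it removes the noise: `θₙ - θ* - Nₙ` obeys a deterministic inequality, in which `N`
enters only through the Lipschitz bound `‖F θₙ - θ*‖ ≤ γ (‖θₙ - θ* - Nₙ‖ + ‖Nₙ‖)`. For
`αₙ = H / (s + n)` the envelope `A / √(s + n) + B / (s + n)` is preserved by that inequality.
Each coordinate of `Nₙ` is sub-Gaussian with variance proxy `2 H M̄² / (s + n)`, so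
`‖Nₙ‖ = O(1 / √(s + n))` holds simultaneously for all `n` up to the horizon by a union bound over
times and coordinates.
-/

namespace StochasticApproximation

open ProbabilityTheory
open scoped NNReal

section RelaxedAverage

variable {E : Type*} [AddCommGroup E] [Module ℝ E]

/-- The relaxed average of the inputs `y` with relaxation weights `a`, started at `0`. Applied to
the noise of a stochastic approximation scheme, it is the part of the iterate caused by the
noise. -/
def relaxedAverage (a : ℕ → ℝ) (y : ℕ → E) : ℕ → E
  | 0 => 0
  | n + 1 => (1 - a n) • relaxedAverage a y n + a n • y n

@[simp]
lemma relaxedAverage_zero (a : ℕ → ℝ) (y : ℕ → E) : relaxedAverage a y 0 = 0 := rfl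

lemma relaxedAverage_succ (a : ℕ → ℝ) (y : ℕ → E) (n : ℕ) :
    relaxedAverage a y (n + 1) = (1 - a n) • relaxedAverage a y n + a n • y n := rfl

lemma relaxedAverage_apply {ι : Type*} (a : ℕ → ℝ) (y : ℕ → ι → E) (n : ℕ) (i : ι) :
    relaxedAverage a y n i = relaxedAverage a (fun k ↦ y k i) n := by
  induction n with
  | zero => rfl
  | succ n ih => simp only [relaxedAverage_succ, Pi.add_apply, Pi.smul_apply, ih]

end RelaxedAverage

section HarmonicStep

/-- The step size `H / (s + n)` with gain `H` and time offset `s`. -/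
noncomputable def harmonicStep (H s : ℝ) (n : ℕ) : ℝ := H / (s + n)

lemma harmonicStep_nonneg {H s : ℝ} (hH : 0 ≤ H) (hs : 0 ≤ s) (n : ℕ) :
    0 ≤ harmonicStep H s n := by
  unfold harmonicStep
  positivity

lemma harmonicStep_le_one {H s : ℝ} (hs : 0 ≤ s) (hHs : H ≤ s) (n : ℕ) :
    harmonicStep H s n ≤ 1 :=
  div_le_one_of_le₀ (hHs.trans (le_add_of_nonneg_right n.cast_nonneg)) (by positivity)

lemma one_sub_inv_div_self_le {u : ℝ} (hu : 0 < u) : (1 - 1 / u) / u ≤ 1 / (u + 1) := by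
  rw [one_sub_div hu.ne', div_div, div_le_div_iff₀ (by positivity) (by positivity)]
  nlinarith

lemma one_sub_inv_div_sqrt_le {u : ℝ} (hu : 0 < u) : (1 - 1 / u) / √u ≤ 1 / √(u + 1) := by
  rw [div_le_div_iff₀ (Real.sqrt_pos.2 hu) (Real.sqrt_pos.2 (by linarith)), one_mul]
  rcases le_total u 1 with hu1 | hu1
  · have hneg : 1 - 1 / u ≤ 0 := sub_nonpos.2 ((one_le_div hu).2 hu1)
    exact (mul_nonpos_of_nonpos_of_nonneg hneg (Real.sqrt_nonneg _)).trans (Real.sqrt_nonneg _)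
  · refine Real.le_sqrt_of_sq_le ?_
    rw [mul_pow, Real.sq_sqrt (by linarith), one_sub_div hu.ne', div_pow, div_mul_eq_mul_div,
      div_le_iff₀ (by positivity)]
    nlinarith

lemma le_sqrt_add_inv_envelope {h s A B : ℝ} (hh : 2 ≤ h) (hs : h ≤ s) (hA : 0 ≤ A) (hB : 0 ≤ B)
    {y : ℕ → ℝ} {K : ℕ} (hy0 : y 0 ≤ B / s)
    (hy : ∀ n < K, y (n + 1) ≤
      (1 - harmonicStep h s n) * y n + harmonicStep h s n * (A / 2 / √(s + n))) :
    ∀ n ≤ K, y n ≤ A / √(s + n) + B / (s + n) := by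
  intro n hn
  induction n with
  | zero =>
    have : 0 ≤ A / √s := by positivity
    simpa using hy0.trans (le_add_of_nonneg_left this)
  | succ n ih =>
    have hstep := hy n hn
    have hcontract := sub_nonneg.2 (harmonicStep_le_one (by linarith) hs n)
    rw [harmonicStep] at hstep hcontract
    have hcast : s + (n + 1 : ℕ) = s + n + 1 := by push_cast; ring
    rw [hcast]
    set u : ℝ := s + n
    have hu : 0 < u := by have : (0 : ℝ) ≤ n := n.cast_nonneg; linarith
    have hsqrt_part : (1 - h / 2 / u) * (A / √u) ≤ A / √(u + 1) := calc
      _ ≤ (1 - 1 / u) * (A / √u) := by gcongr; linarith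
      _ = A * ((1 - 1 / u) / √u) := by ring
      _ ≤ A * (1 / √(u + 1)) := mul_le_mul_of_nonneg_left (one_sub_inv_div_sqrt_le hu) hA
      _ = A / √(u + 1) := mul_one_div _ _
    have hinv_part : (1 - h / u) * (B / u) ≤ B / (u + 1) := calc
      _ ≤ (1 - 1 / u) * (B / u) := by gcongr; linarith
      _ = B * ((1 - 1 / u) / u) := by ring
      _ ≤ B * (1 / (u + 1)) := mul_le_mul_of_nonneg_left (one_sub_inv_div_self_le hu) hB
      _ = B / (u + 1) := mul_one_div _ _
    calc
      y (n + 1) ≤ (1 - h / u) * y n + h / u * (A / 2 / √u) := hstep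
      _ ≤ (1 - h / u) * (A / √u + B / u) + h / u * (A / 2 / √u) := by
        gcongr
        exact ih (by omega)
      _ = (1 - h / 2 / u) * (A / √u) + (1 - h / u) * (B / u) := by ring
      _ ≤ A / √(u + 1) + B / (u + 1) := add_le_add hsqrt_part hinv_part

lemma harmonicStep_variance_le {H s : ℝ} (hH : 1 ≤ H) (hs : 2 * H ≤ s) (n : ℕ) :
    (1 - harmonicStep H s n) ^ 2 * (2 * H / (s + n)) + harmonicStep H s n ^ 2 ≤
      2 * H / (s + (n + 1 : ℕ)) := by
  have hcast : s + (n + 1 : ℕ) = s + n + 1 := by push_cast; ring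
  rw [hcast, harmonicStep]
  have hu : 2 * H ≤ s + n := hs.trans (le_add_of_nonneg_right n.cast_nonneg)
  set u : ℝ := s + n
  have hu0 : 0 < u := by linarith
  have hcubic : (2 * (u - H) ^ 2 + H * u) * (u + 1) ≤ 2 * u ^ 3 := by
    nlinarith [mul_nonneg (mul_nonneg (by linarith : 0 ≤ H) hu0.le) (sub_nonneg.2 hu),
      mul_nonneg (sub_nonneg.2 hH) (sq_nonneg u)]
  calc
    (1 - H / u) ^ 2 * (2 * H / u) + (H / u) ^ 2
        = H * (2 * (u - H) ^ 2 + H * u) / u ^ 3 := by field_simp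
    _ ≤ 2 * H / (u + 1) := by
      rw [div_le_div_iff₀ (by positivity) (by positivity)]
      nlinarith [mul_le_mul_of_nonneg_left hcubic (by linarith : 0 ≤ H)]

end HarmonicStep

section Deterministic

variable {E : Type*} [NormedAddCommGroup E] [NormedSpace ℝ E] {F : E → E} {xstar : E} {γ : ℝ}

lemma norm_sub_relaxedAverage_succ_le (hγ : 0 ≤ γ) (hF : ∀ x, ‖F x - xstar‖ ≤ γ * ‖x - xstar‖)
    {a : ℕ → ℝ} {x w : ℕ → E} {n : ℕ} (ha0 : 0 ≤ a n) (ha1 : a n ≤ 1)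
    (hx : x (n + 1) = (1 - a n) • x n + a n • (F (x n) + w n)) :
    ‖x (n + 1) - xstar - relaxedAverage a w (n + 1)‖ ≤
      (1 - a n * (1 - γ)) * ‖x n - xstar - relaxedAverage a w n‖ +
        a n * (γ * ‖relaxedAverage a w n‖) := by
  set N := relaxedAverage a w
  have hdecomp : x (n + 1) - xstar - N (n + 1) =
      (1 - a n) • (x n - xstar - N n) + a n • (F (x n) - xstar) := by
    rw [hx, show N (n + 1) = (1 - a n) • N n + a n • w n from rfl]
    module
  have hFx : ‖F (x n) - xstar‖ ≤ γ * (‖x n - xstar - N n‖ + ‖N n‖) :=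
    (hF _).trans (mul_le_mul_of_nonneg_left (norm_le_norm_sub_add _ _) hγ)
  calc
    _ ≤ ‖(1 - a n) • (x n - xstar - N n)‖ + ‖a n • (F (x n) - xstar)‖ :=
      hdecomp ▸ norm_add_le _ _
    _ = (1 - a n) * ‖x n - xstar - N n‖ + a n * ‖F (x n) - xstar‖ := by
      rw [norm_smul_of_nonneg (sub_nonneg.2 ha1), norm_smul_of_nonneg ha0]
    _ ≤ (1 - a n) * ‖x n - xstar - N n‖ + a n * (γ * (‖x n - xstar - N n‖ + ‖N n‖)) := by gcongr
    _ = _ := by ring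

theorem norm_sub_le_of_norm_relaxedAverage_le (hγ0 : 0 ≤ γ) (hγ1 : γ < 1)
    (hF : ∀ x, ‖F x - xstar‖ ≤ γ * ‖x - xstar‖) {H s : ℝ} (hH : 2 / (1 - γ) ≤ H) (hs : H ≤ s)
    {x w : ℕ → E} (hx : ∀ n, x (n + 1) =
      (1 - harmonicStep H s n) • x n + harmonicStep H s n • (F (x n) + w n))
    {c : ℝ} (hc : 0 ≤ c) {K : ℕ}
    (hw : ∀ n ≤ K, ‖relaxedAverage (harmonicStep H s) w n‖ ≤ c / √(s + n)) :
    ‖x K - xstar‖ ≤ 2 * c / (1 - γ) / √(s + K) + ‖x 0 - xstar‖ * s / (s + K) := by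
  have hg : 0 < 1 - γ := sub_pos.2 hγ1
  have hgain : 2 ≤ H * (1 - γ) := (div_le_iff₀ hg).1 hH
  have hH0 : 0 < H := (by positivity : 0 < 2 / (1 - γ)).trans_le hH
  have hs0 : 0 < s := hH0.trans_le hs
  set N := relaxedAverage (harmonicStep H s) w
  have hdrift : ‖x K - xstar - N K‖ ≤
      2 * γ * c / (1 - γ) / √(s + K) + ‖x 0 - xstar‖ * s / (s + K) := by
    refine le_sqrt_add_inv_envelope (y := fun n ↦ ‖x n - xstar - N n‖) hgain (by nlinarith)
      (by positivity) (by positivity) (by simp [N, hs0.ne']) (fun n hn ↦ ?_) K le_rfl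
    have hstep0 := harmonicStep_nonneg hH0.le hs0.le n
    refine (norm_sub_relaxedAverage_succ_le hγ0 hF hstep0 (harmonicStep_le_one hs0.le hs n)
      (hx n)).trans ?_
    calc
      _ ≤ (1 - harmonicStep H s n * (1 - γ)) * ‖x n - xstar - N n‖ +
          harmonicStep H s n * (γ * (c / √(s + n))) := by
        gcongr
        exact hw n hn.le
      _ = _ := by
        simp only [harmonicStep]
        field_simp
  calc
    ‖x K - xstar‖ ≤ ‖x K - xstar - N K‖ + ‖N K‖ := norm_le_norm_sub_add _ _
    _ ≤ 2 * γ * c / (1 - γ) / √(s + K) + ‖x 0 - xstar‖ * s / (s + K) + c / √(s + K) :=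
      add_le_add hdrift (hw K le_rfl)
    _ = (1 + γ) * c / (1 - γ) / √(s + K) + ‖x 0 - xstar‖ * s / (s + K) := by
      field_simp
      ring
    _ ≤ _ := by
      gcongr
      linarith

end Deterministic

section SubGaussian

variable {Ω : Type*} {m mΩ : MeasurableSpace Ω} {μ : Measure Ω} {X Y : Ω → ℝ} {b c : ℝ≥0}

lemma exp_mul_le_cosh_add_div_mul_sinh {y r : ℝ} (hy : |y| ≤ r) (q : ℝ) :
    Real.exp (q * y) ≤ Real.cosh (q * r) + y / r * Real.sinh (q * r) := by
  rcases ((abs_nonneg y).trans hy).eq_or_lt with rfl | hr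
  · simp [abs_nonpos_iff.1 hy]
  · have hyr : |y / r| ≤ 1 := by rwa [abs_div, abs_of_pos hr, div_le_one hr]
    convert Real.exp_mul_le_cosh_add_mul_sinh hyr (q * r) using 2
    field_simp

lemma integral_mul_eq_zero_of_condExp_eq_zero (hm : m ≤ mΩ) [SigmaFinite (μ.trim hm)]
    (hX : StronglyMeasurable[m] X) (hXY : Integrable (X * Y) μ) (hY : Integrable Y μ)
    (hcond : μ[Y | m] =ᵐ[μ] 0) : ∫ ω, X ω * Y ω ∂μ = 0 := by
  have hzero : μ[X * Y | m] =ᵐ[μ] 0 := by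
    filter_upwards [condExp_mul_of_stronglyMeasurable_left hX hXY hY, hcond] with ω hpull hω
    simp [hpull, hω]
  calc
    ∫ ω, (X * Y) ω ∂μ = ∫ ω, (μ[X * Y | m]) ω ∂μ := (integral_condExp hm).symm
    _ = 0 := integral_eq_zero_of_ae hzero

lemma hasSubgaussianMGF_mono {c' : ℝ≥0} (hX : HasSubgaussianMGF X c μ) (hc : c ≤ c') :
    HasSubgaussianMGF X c' μ where
  integrable_exp_mul := hX.integrable_exp_mul
  mgf_le t := (hX.mgf_le t).trans (by gcongr)

-- Mathlib's `HasSubgaussianMGF.add_of_hasCondSubgaussianMGF` goes through conditional kernels and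
-- therefore needs a standard Borel space.
lemma hasSubgaussianMGF_add_of_condExp_eq_zero [IsFiniteMeasure μ] (hm : m ≤ mΩ)
    (hX : HasSubgaussianMGF X c μ) (hXm : StronglyMeasurable[m] X)
    (hY : AEStronglyMeasurable Y μ) (hYb : ∀ᵐ ω ∂μ, |Y ω| ≤ b) (hcond : μ[Y | m] =ᵐ[μ] 0) :
    HasSubgaussianMGF (X + Y) (c + b ^ 2) μ := by
  have hexpXY (t : ℝ) : Integrable (fun ω ↦ Real.exp (t * X ω) * Y ω) μ :=
    (hX.integrable_exp_mul t).mul_bdd hY hYb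
  set dom : ℝ → Ω → ℝ := fun t ω ↦ Real.cosh (t * b) * Real.exp (t * X ω) +
    Real.sinh (t * b) / b * (Real.exp (t * X ω) * Y ω)
  have hdom (t : ℝ) : Integrable (dom t) μ :=
    ((hX.integrable_exp_mul t).const_mul _).add ((hexpXY t).const_mul _)
  have hle (t : ℝ) : ∀ᵐ ω ∂μ, Real.exp (t * (X + Y) ω) ≤ dom t ω := by
    filter_upwards [hYb] with ω hω
    calc
      Real.exp (t * (X + Y) ω) = Real.exp (t * X ω) * Real.exp (t * Y ω) := by
        rw [Pi.add_apply, mul_add, Real.exp_add]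
      _ ≤ Real.exp (t * X ω) * (Real.cosh (t * b) + Y ω / b * Real.sinh (t * b)) := by
        gcongr
        exact exp_mul_le_cosh_add_div_mul_sinh hω t
      _ = dom t ω := by ring
  have hint (t : ℝ) : Integrable (fun ω ↦ Real.exp (t * (X + Y) ω)) μ := by
    refine (hdom t).mono' (by have := hX.aestronglyMeasurable; fun_prop) ?_
    filter_upwards [hle t] with ω hω
    rwa [Real.norm_of_nonneg (Real.exp_pos _).le]
  refine ⟨hint, fun t ↦ ?_⟩
  have horth : ∫ ω, Real.exp (t * X ω) * Y ω ∂μ = 0 :=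
    integral_mul_eq_zero_of_condExp_eq_zero hm
      (Real.continuous_exp.comp_stronglyMeasurable (hXm.const_mul t)) (hexpXY t)
      (.of_bound hY b hYb) hcond
  calc
    mgf (X + Y) μ t ≤ ∫ ω, dom t ω ∂μ := integral_mono_ae (hint t) (hdom t) (hle t)
    _ = Real.cosh (t * b) * mgf X μ t := by
      rw [integral_add ((hX.integrable_exp_mul t).const_mul _) ((hexpXY t).const_mul _),
        integral_const_mul, integral_const_mul, horth, mul_zero, add_zero, mgf]
    _ ≤ Real.exp ((t * b) ^ 2 / 2) * Real.exp (c * t ^ 2 / 2) := by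
      gcongr
      · exact mgf_nonneg
      · exact Real.cosh_le_exp_half_sq _
      · exact hX.mgf_le t
    _ = Real.exp ((c + b ^ 2 : ℝ≥0) * t ^ 2 / 2) := by
      rw [← Real.exp_add]
      push_cast
      ring_nf

lemma measureReal_sqrt_lt_abs_le [IsFiniteMeasure μ] (hX : HasSubgaussianMGF X c μ) {L : ℝ}
    (hL : 0 ≤ L) :
    μ.real {ω | √(2 * c * L) < |X ω|} ≤ 2 * Real.exp (-L) := by
  rcases eq_or_ne c 0 with rfl | hc
  · have hnull : μ {ω | ¬ X ω = 0} = 0 := hX.ae_eq_zero_of_hasSubgaussianMGF_zero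
    simp only [NNReal.coe_zero, mul_zero, zero_mul, Real.sqrt_zero, abs_pos, measureReal_def, hnull,
      ENNReal.toReal_zero]
    positivity
  have hexponent : -√(2 * c * L) ^ 2 / (2 * c) = -L := by
    rw [Real.sq_sqrt (by positivity)]
    field_simp
  have htail {W : Ω → ℝ} (hW : HasSubgaussianMGF W c μ) :
      μ.real {ω | √(2 * c * L) ≤ W ω} ≤ Real.exp (-L) :=
    hexponent ▸ hW.measure_ge_le (Real.sqrt_nonneg _)
  calc
    μ.real {ω | √(2 * c * L) < |X ω|} ≤
        μ.real ({ω | √(2 * c * L) ≤ X ω} ∪ {ω | √(2 * c * L) ≤ (-X) ω}) :=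
      measureReal_mono fun ω (hω : √(2 * c * L) < |X ω|) ↦ (lt_abs.1 hω).imp le_of_lt le_of_lt
    _ ≤ μ.real {ω | √(2 * c * L) ≤ X ω} + μ.real {ω | √(2 * c * L) ≤ (-X) ω} :=
      measureReal_union_le _ _
    _ ≤ 2 * Real.exp (-L) := by linarith [htail hX, htail hX.neg]

end SubGaussian

section MartingaleDifference

variable {Ω E : Type*} {mΩ : MeasurableSpace Ω} {μ : Measure Ω}

/-- `Y` is a martingale difference sequence bounded by `b`. The increment `Y n` is revealed at time
`n + 1` and centred given the information `ℱ n`. -/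
structure IsBoundedMartingaleDifference [NormedAddCommGroup E] [NormedSpace ℝ E] [CompleteSpace E]
    (ℱ : Filtration ℕ mΩ) (Y : ℕ → Ω → E) (b : ℝ≥0) (μ : Measure Ω) : Prop where
  stronglyMeasurable (n : ℕ) : StronglyMeasurable[ℱ (n + 1)] (Y n)
  condExp_eq_zero (n : ℕ) : μ[Y n | ℱ n] =ᵐ[μ] 0
  norm_le (n : ℕ) : ∀ᵐ ω ∂μ, ‖Y n ω‖ ≤ b

variable {ℱ : Filtration ℕ mΩ} {b : ℝ≥0}

lemma stronglyMeasurable_relaxedAverage [NormedAddCommGroup E] [NormedSpace ℝ E] {Y : ℕ → Ω → E}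
    (hY : ∀ n, StronglyMeasurable[ℱ (n + 1)] (Y n)) (a : ℕ → ℝ) (n : ℕ) :
    StronglyMeasurable[ℱ n] (relaxedAverage a Y n) := by
  induction n with
  | zero => exact stronglyMeasurable_zero
  | succ n ih =>
    exact ((ih.mono (ℱ.mono n.le_succ)).const_smul (1 - a n)).add ((hY n).const_smul (a n))

lemma IsBoundedMartingaleDifference.apply {ι : Type*} [Fintype ι] [IsFiniteMeasure μ]
    {Y : ℕ → Ω → ι → ℝ} (hY : IsBoundedMartingaleDifference ℱ Y b μ) (i : ι) :
    IsBoundedMartingaleDifference ℱ (fun n ω ↦ Y n ω i) b μ where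
  stronglyMeasurable n := (continuous_apply i).comp_stronglyMeasurable (hY.stronglyMeasurable n)
  condExp_eq_zero n := by
    have hint : Integrable (Y n) μ :=
      .of_bound ((hY.stronglyMeasurable n).mono (ℱ.le _)).aestronglyMeasurable b (hY.norm_le n)
    have hcomm := (ContinuousLinearMap.proj (R := ℝ) (φ := fun _ : ι ↦ ℝ) i).comp_condExp_comm
      (m := ℱ n) hint
    exact hcomm.symm.trans ((hY.condExp_eq_zero n).fun_comp fun v ↦ v i)
  norm_le n := (hY.norm_le n).mono fun ω hω ↦ (norm_le_pi_norm (Y n ω) i).trans hω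

theorem IsBoundedMartingaleDifference.hasSubgaussianMGF_relaxedAverage [IsProbabilityMeasure μ]
    {Y : ℕ → Ω → ℝ} (hY : IsBoundedMartingaleDifference ℱ Y b μ) {a : ℕ → ℝ} {V : ℕ → ℝ≥0}
    (hV : ∀ n, (1 - a n) ^ 2 * V n + a n ^ 2 ≤ V (n + 1)) (n : ℕ) :
    HasSubgaussianMGF (relaxedAverage a Y n) (b ^ 2 * V n) μ := by
  induction n with
  | zero => exact hasSubgaussianMGF_mono .zero zero_le
  | succ n ih =>
    have hsum := hasSubgaussianMGF_add_of_condExp_eq_zero (b := ‖a n‖₊ * b) (ℱ.le n)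
      (ih.const_mul (1 - a n))
      ((stronglyMeasurable_relaxedAverage hY.stronglyMeasurable a n).const_mul _)
      (((hY.stronglyMeasurable n).mono (ℱ.le _)).const_smul (a n)).aestronglyMeasurable
      (by
        filter_upwards [hY.norm_le n] with ω hω
        simpa [abs_mul] using mul_le_mul_of_nonneg_left hω (abs_nonneg (a n)))
      (by
        filter_upwards [condExp_smul (a n) (Y n) (ℱ n), hY.condExp_eq_zero n] with ω hsmul hω
        simp [hsmul, hω])
    refine hasSubgaussianMGF_mono hsum ?_
    rw [← NNReal.coe_le_coe]
    push_cast
    calc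
      (1 - a n) ^ 2 * ((b : ℝ) ^ 2 * V n) + (‖a n‖ * b) ^ 2 =
          (b : ℝ) ^ 2 * ((1 - a n) ^ 2 * V n + a n ^ 2) := by
        rw [mul_pow, Real.norm_eq_abs, sq_abs]
        ring
      _ ≤ (b : ℝ) ^ 2 * V (n + 1) := by gcongr; exact hV n

lemma IsBoundedMartingaleDifference.measureReal_lt_abs_relaxedAverage_le [IsProbabilityMeasure μ]
    {Y : ℕ → Ω → ℝ} (hY : IsBoundedMartingaleDifference ℱ Y b μ) {H s L : ℝ} (hH : 1 ≤ H)
    (hs : 2 * H ≤ s) (hL : 0 ≤ L) (n : ℕ) :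
    μ.real {ω | 2 * b * √(H * L) / √(s + n) < |relaxedAverage (harmonicStep H s) Y n ω|} ≤
      2 * Real.exp (-L) := by
  have hs0 : 0 < s := by linarith
  have hproxy (k : ℕ) : 0 ≤ 2 * H / (s + k) := by positivity
  have hsubG := hY.hasSubgaussianMGF_relaxedAverage (a := harmonicStep H s)
    (V := fun k ↦ ⟨2 * H / (s + k), hproxy k⟩) (harmonicStep_variance_le hH hs) n
  convert measureReal_sqrt_lt_abs_le hsubG hL using 5
  calc
    2 * b * √(H * L) / √(s + n) = √((2 * b) ^ 2 * (H * L) / (s + n)) := by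
      rw [Real.sqrt_div (by positivity), Real.sqrt_mul (sq_nonneg _),
        Real.sqrt_sq (by positivity)]
    _ = √(2 * (b ^ 2 * (2 * H / (s + n))) * L) := by ring_nf

lemma IsBoundedMartingaleDifference.measureReal_lt_norm_relaxedAverage_le [IsProbabilityMeasure μ]
    {ι : Type*} [Fintype ι] {Y : ℕ → Ω → ι → ℝ} (hY : IsBoundedMartingaleDifference ℱ Y b μ)
    {H s L : ℝ} (hH : 1 ≤ H) (hs : 2 * H ≤ s) (hL : 0 ≤ L) (n : ℕ) :
    μ.real {ω | 2 * b * √(H * L) / √(s + n) < ‖relaxedAverage (harmonicStep H s) Y n ω‖} ≤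
      2 * Fintype.card ι * Real.exp (-L) := by
  set ε := 2 * b * √(H * L) / √(s + n)
  have hsub : {ω | ε < ‖relaxedAverage (harmonicStep H s) Y n ω‖} ⊆
      ⋃ i, {ω | ε < |relaxedAverage (harmonicStep H s) (fun k ω ↦ Y k ω i) n ω|} := by
    intro ω hω
    by_contra hnot
    refine hω.not_ge ((pi_norm_le_iff_of_nonneg (by positivity)).2 fun i ↦ ?_)
    have hi : |relaxedAverage (harmonicStep H s) (fun k ω ↦ Y k ω i) n ω| ≤ ε :=
      not_lt.1 fun h ↦ hnot (Set.mem_iUnion.2 ⟨i, h⟩)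
    simpa only [relaxedAverage_apply, Real.norm_eq_abs] using hi
  calc
    _ ≤ ∑ i, μ.real {ω | ε < |relaxedAverage (harmonicStep H s) (fun k ω ↦ Y k ω i) n ω|} :=
      (measureReal_mono hsub).trans (measureReal_iUnion_fintype_le _)
    _ ≤ ∑ _i : ι, 2 * Real.exp (-L) :=
      Finset.sum_le_sum fun i _ ↦ (hY.apply i).measureReal_lt_abs_relaxedAverage_le hH hs hL n
    _ = 2 * Fintype.card ι * Real.exp (-L) := by
      rw [Finset.sum_const, Finset.card_univ, nsmul_eq_mul]
      ring

lemma ofReal_one_sub_card_mul_le_measure_biInter [IsProbabilityMeasure μ] {κ : Type*}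
    (S : Finset κ) {A : κ → Set Ω} {p : ℝ} (hA : ∀ k ∈ S, μ.real (A k)ᶜ ≤ p) :
    ENNReal.ofReal (1 - S.card * p) ≤ μ (⋂ k ∈ S, A k) := by
  have hcompl : μ.real (⋂ k ∈ S, A k)ᶜ ≤ S.card * p := by
    rw [Set.compl_iInter₂, ← nsmul_eq_mul]
    exact (measureReal_biUnion_finset_le _ _).trans (Finset.sum_le_card_nsmul _ _ _ hA)
  have hcover : 1 ≤ μ.real (⋂ k ∈ S, A k) + μ.real (⋂ k ∈ S, A k)ᶜ := by
    rw [← probReal_univ (μ := μ), ← Set.union_compl_self (⋂ k ∈ S, A k)]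
    exact measureReal_union_le _ _
  exact ENNReal.ofReal_le_of_le_toReal (by rw [← measureReal_def]; linarith)

theorem IsBoundedMartingaleDifference.le_measure_forall_norm_relaxedAverage_le
    [IsProbabilityMeasure μ] {ι : Type*} [Fintype ι] {Y : ℕ → Ω → ι → ℝ}
    (hY : IsBoundedMartingaleDifference ℱ Y b μ) {H s L : ℝ} (hH : 1 ≤ H) (hs : 2 * H ≤ s)
    (hL : 0 ≤ L) (K : ℕ) :
    ENNReal.ofReal (1 - K * (2 * Fintype.card ι * Real.exp (-L))) ≤
      μ {ω | ∀ n ≤ K,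
        ‖relaxedAverage (harmonicStep H s) Y n ω‖ ≤ 2 * b * √(H * L) / √(s + n)} := by
  have hunion := ofReal_one_sub_card_mul_le_measure_biInter (μ := μ) (Finset.Icc 1 K)
    (A := fun n ↦ {ω | ‖relaxedAverage (harmonicStep H s) Y n ω‖ ≤ 2 * b * √(H * L) / √(s + n)})
    (fun n _ ↦ by
      simpa only [Set.compl_ofPred, not_le] using
        hY.measureReal_lt_norm_relaxedAverage_le hH hs hL n)
  rw [Nat.card_Icc, Nat.add_sub_cancel] at hunion
  refine hunion.trans (measure_mono fun ω hω n hn ↦ ?_)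
  rcases n.eq_zero_or_pos with rfl | hpos
  · simp only [relaxedAverage_zero, Pi.zero_apply, norm_zero]
    positivity
  · exact Set.mem_iInter₂.1 hω n (Finset.mem_Icc.2 ⟨hpos, hn⟩)

end MartingaleDifference

section Convergence

variable {ι Ω : Type*} [Fintype ι] {mΩ : MeasurableSpace Ω} {μ : Measure Ω} [IsProbabilityMeasure μ]
  {ℱ : Filtration ℕ mΩ} {F : (ι → ℝ) → (ι → ℝ)} {xstar : ι → ℝ} {γ : ℝ}

theorem IsBoundedMartingaleDifference.le_measure_norm_sub_le {Y : ℕ → Ω → ι → ℝ} {b : ℝ≥0}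
    (hY : IsBoundedMartingaleDifference ℱ Y b μ) (hγ0 : 0 ≤ γ) (hγ1 : γ < 1)
    (hF : ∀ x, ‖F x - xstar‖ ≤ γ * ‖x - xstar‖) {H s : ℝ} (hH : 2 / (1 - γ) ≤ H)
    (hs : 2 * H ≤ s) {x : ℕ → Ω → ι → ℝ} (hx : ∀ n, ∀ᵐ ω ∂μ, x (n + 1) ω =
      (1 - harmonicStep H s n) • x n ω + harmonicStep H s n • (F (x n ω) + Y n ω))
    {L : ℝ} (hL : 0 ≤ L) (K : ℕ) :
    ENNReal.ofReal (1 - K * (2 * Fintype.card ι * Real.exp (-L))) ≤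
      μ {ω | ‖x K ω - xstar‖ ≤
        4 * b / (1 - γ) * √(H * L / (s + K)) + ‖x 0 ω - xstar‖ * s / (s + K)} := by
  have hH2 : 2 ≤ H := (le_div_self zero_le_two (sub_pos.2 hγ1) (by linarith)).trans hH
  refine (hY.le_measure_forall_norm_relaxedAverage_le (by linarith) hs hL K).trans
    (measure_mono_ae ?_)
  filter_upwards [ae_all_iff.2 hx] with ω hxω hN
  refine (norm_sub_le_of_norm_relaxedAverage_le (x := fun n ↦ x n ω) (w := fun n ↦ Y n ω)
    (c := 2 * b * √(H * L)) hγ0 hγ1 hF hH (by linarith) hxω (by positivity)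
    (fun n hn ↦ by simpa only [relaxedAverage_apply] using hN n hn)).trans_eq ?_
  rw [Real.sqrt_div (by positivity)]
  ring

end Convergence

end StochasticApproximation

open StochasticApproximation in
theorem stmt_0_general {ι Ω : Type*} [Fintype ι] [Nonempty ι] {mΩ : MeasurableSpace Ω}
    {μ : Measure Ω} [IsProbabilityMeasure μ] {ℱ : Filtration ℕ mΩ} {γ' : ℝ} (hγ0 : 0 ≤ γ')
    (hγ1 : γ' < 1) {F : (ι → ℝ) → (ι → ℝ)} {θstar : ι → ℝ}
    (hF : ∀ x, ‖F x - θstar‖ ≤ γ' * ‖x - θstar‖) {Z : ℝ} (hθstar : ‖θstar‖ ≤ Z) {τ : ℕ} {t₀ H : ℝ}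
    (hH : 2 / (1 - γ') ≤ H) (ht₀ : 2 * H ≤ τ + t₀) {θ M : ℕ → Ω → ι → ℝ} {Mbar : ℝ}
    (hθτ : ∀ᵐ ω ∂μ, ‖θ τ ω‖ ≤ Z)
    (hMmeas : ∀ t, τ ≤ t → StronglyMeasurable[ℱ (t + 1)] (M t))
    (hMcond : ∀ t, τ ≤ t → μ[M t | ℱ t] =ᵐ[μ] 0)
    (hMbdd : ∀ t, τ ≤ t → ∀ᵐ ω ∂μ, ‖M t ω‖ ≤ Mbar)
    (hrec : ∀ t, τ ≤ t → ∀ᵐ ω ∂μ, θ (t + 1) ω =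
      (1 - H / ((t : ℝ) + t₀)) • θ t ω + (H / ((t : ℝ) + t₀)) • (F (θ t ω) + M t ω))
    {T : ℕ} (hT : τ ≤ T) {δ : ℝ} (hδ : δ ∈ Set.Ioc (0 : ℝ) 1) :
    ENNReal.ofReal (1 - ((T : ℝ) - τ) * δ) ≤
      μ {ω | ‖θ T ω - θstar‖ ≤
        (4 * Mbar / (1 - γ')) * √(H * Real.log (2 * Fintype.card ι / δ) / ((T : ℝ) + t₀)) +
          4 * Z * ((τ : ℝ) + t₀) / ((1 - γ') * ((T : ℝ) + t₀))} := by
  obtain ⟨K, rfl⟩ := Nat.exists_eq_add_of_le hT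
  obtain ⟨ω₀, hω₀⟩ := (hMbdd τ le_rfl).exists
  lift Mbar to NNReal using (norm_nonneg _).trans hω₀
  have hd : (1 : ℝ) ≤ Fintype.card ι := Nat.one_le_cast.2 Fintype.card_pos
  have hδ0 : 0 < δ := hδ.1
  have hL : 0 ≤ Real.log (2 * Fintype.card ι / δ) :=
    Real.log_nonneg ((one_le_div hδ0).2 (by linarith [hδ.2]))
  have hexpL : 2 * Fintype.card ι * Real.exp (-Real.log (2 * Fintype.card ι / δ)) = δ := by
    rw [Real.exp_neg, Real.exp_log (by positivity), inv_div, mul_div_cancel₀ _ (by positivity)]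
  have hcast (n : ℕ) : ((τ + n : ℕ) : ℝ) + t₀ = τ + t₀ + n := by push_cast; ring
  have hY : IsBoundedMartingaleDifference
      ⟨fun n ↦ ℱ (τ + n), fun _ _ h ↦ ℱ.mono (by omega), fun n ↦ ℱ.le (τ + n)⟩
      (fun n ↦ M (τ + n)) Mbar μ :=
    ⟨fun n ↦ hMmeas (τ + n) (by omega), fun n ↦ hMcond (τ + n) (by omega),
      fun n ↦ hMbdd (τ + n) (by omega)⟩
  have hprob := hY.le_measure_norm_sub_le (x := fun n ↦ θ (τ + n)) hγ0 hγ1 hF hH ht₀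
    (fun n ↦ by simpa only [hcast, harmonicStep, ← Nat.add_assoc] using hrec (τ + n) (by omega))
    hL K
  rw [hexpL] at hprob
  rw [hcast, Nat.cast_add, add_sub_cancel_left]
  refine hprob.trans (measure_mono_ae ?_)
  filter_upwards [hθτ] with ω hinit hω
  have hg : 0 < 1 - γ' := sub_pos.2 hγ1
  have hs : 0 ≤ (τ : ℝ) + t₀ := by linarith [(by positivity : 0 ≤ 2 / (1 - γ'))]
  have hinit_sub : ‖θ τ ω - θstar‖ ≤ 4 * Z / (1 - γ') := calc
    ‖θ τ ω - θstar‖ ≤ 4 * Z := by linarith [norm_sub_le (θ τ ω) θstar, norm_nonneg θstar]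
    _ ≤ 4 * Z / (1 - γ') := le_div_self (by linarith [norm_nonneg θstar]) hg (by linarith)
  calc
    ‖θ (τ + K) ω - θstar‖ ≤ _ := hω
    _ ≤ _ + 4 * Z / (1 - γ') * (τ + t₀) / (τ + t₀ + K) := by gcongr; exact hinit_sub
    _ = _ := by rw [div_mul_eq_mul_div (4 * Z), div_div]

/-- Finite-time convergence theorem for the stochastic-approximation recursion
`θ_{t+1} = (1-α_t) θ_t + α_t (F(θ_t) + M_t)` with step sizes `α_t = H/(t+t₀)`,
underlying SOR minimax Q-learning with linear function approximation.
`ℝ^d` carries the sup norm (`Fin d → ℝ`); `F` is a `γ'`-contraction with fixed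
point `θ*` of norm at most `Z`; `(M_t)` is a bounded martingale-difference noise
sequence (`Mbar` plays the role of `M̄`). For every `T > τ` and `δ ∈ (0,1)`, with
probability at least `1 - (T-τ)δ`,
`‖θ_T - θ*‖ ≤ (4M̄/(1-γ')) √(H log(2d/δ)/(T+t₀)) + 4Z(τ+t₀)/((1-γ')(T+t₀))`. -/
theorem stmt_0 (d : ℕ) (hd : 1 ≤ d) (γ' : ℝ) (hγ' : γ' ∈ Set.Ioo (0 : ℝ) 1)
    (F : (Fin d → ℝ) → (Fin d → ℝ))
    (hF : ∀ x y : Fin d → ℝ, ‖F x - F y‖ ≤ γ' * ‖x - y‖)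
    (θstar : Fin d → ℝ) (hfix : F θstar = θstar)
    (Z : ℝ) (hZ : 0 < Z) (hθstar : ‖θstar‖ ≤ Z)
    {Ω : Type*} {m0 : MeasurableSpace Ω} (μ : Measure Ω) [IsProbabilityMeasure μ]
    (ℱ : Filtration ℕ m0)
    (τ t₀ : ℕ) (hτ : 1 ≤ τ)
    (H : ℝ) (hH : 2 / (1 - γ') ≤ H)
    (ht₀ : max (4 * H) (τ : ℝ) ≤ (t₀ : ℝ))
    (θ M : ℕ → Ω → Fin d → ℝ) (Mbar : ℝ)
    (hadapted : Adapted ℱ θ)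
    (hθbdd : ∀ t, ∀ᵐ ω ∂μ, ‖θ t ω‖ ≤ Z)
    (hMmeas : ∀ t, StronglyMeasurable[ℱ (t + 1)] (M t))
    (hMcond : ∀ t, μ[M t | ℱ t] =ᵐ[μ] 0)
    (hMbdd : ∀ t, ∀ᵐ ω ∂μ, ‖M t ω‖ ≤ Mbar)
    (hrec : ∀ t, τ ≤ t → ∀ᵐ ω ∂μ,
      θ (t + 1) ω =
        (1 - H / ((t : ℝ) + t₀)) • θ t ω
        + (H / ((t : ℝ) + t₀)) • (F (θ t ω) + M t ω)) :
    ∀ T : ℕ, τ < T → ∀ δ : ℝ, δ ∈ Set.Ioo (0 : ℝ) 1 →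
      ENNReal.ofReal (1 - ((T : ℝ) - (τ : ℝ)) * δ) ≤
        μ {ω | ‖θ T ω - θstar‖ ≤
          (4 * Mbar / (1 - γ')) * Real.sqrt (H * Real.log (2 * d / δ) / ((T : ℝ) + t₀))
          + 4 * Z * ((τ : ℝ) + t₀) / ((1 - γ') * ((T : ℝ) + t₀))} := by
  intro T hT δ hδ
  have : Nonempty (Fin d) := Fin.pos_iff_nonempty.1 hd
  have hH0 : 0 ≤ H := (div_nonneg zero_le_two (sub_nonneg.2 hγ'.2.le)).trans hH
  have hs : 2 * H ≤ τ + t₀ := by linarith [hH0, (le_max_left _ _).trans ht₀, τ.cast_nonneg (α := ℝ)]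
  simpa only [Fintype.card_fin] using stmt_0_general hγ'.1.le hγ'.2
    (fun x ↦ by simpa only [hfix] using hF x θstar) hθstar hH hs (hθbdd τ) (fun t _ ↦ hMmeas t)
    (fun t _ ↦ hMcond t) (fun t _ ↦ hMbdd t) hrec hT.le ⟨hδ.1, hδ.2.le⟩
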